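/- For every set Γ of infinite binary sequences, the Hausdorff dimension of Γ equals the infimum of the set of all s ∈ (0,∞) for which there exists a learning function l that s-learns every X ∈ Γ; that is, dim_H(Γ) = inf{s ∈ (0,∞) : some learning function s-learns every X ∈ Γ}. -/

import Mathlib

/-!
Both inequalities turn on the correspondence between yes-answers and bits of probability.

If `l` learns every `X ∈ Γ` at rate `s` and `s < t`, then each `X ∈ Γ` has infinitely many prefixes
`w` with path average at least `1 - t`. By the measure condition the cylinders of such `w` of length
`n` have total measure at most `2 ^ (-(1 - t) * n)`, so there are at most `2 ^ (t * n)` of them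
(`tsum_fiber_le`). The minimal ones of length at least `k` form a prefix-free cover, which is cheap
for every exponent above `t` (`tendsto_Hsk_of_learns`).

Conversely, if `H^t(Γ) = 0`, then cheap covers combine into a measure `ν` of mass at most `1` with
`ν (cylinder w) ≥ 2 ^ (-t * |w|)` for infinitely many prefixes `w` of each `X ∈ Γ`
(`exists_measure_of_tendsto_Hsk`). The learner `capitalLearner ν` says yes whenever the martingale
`w ↦ 2 ^ |w| * ν (cylinder w)` reaches a new power of `2`. Ville's inequality (`ville`) gives its
measure condition. As the capital at most doubles at each step, reaching capital `2 ^ N` takes `N`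
yes-answers (`le_card_yes`), so up to `w` there are at least about `(1 - t) * |w|` of them.
-/

open Filter MeasureTheory
open scoped ENNReal

/-- `pref X n` is the string consisting of the first `n` bits of the sequence `X`. -/
def pref (X : ℕ → Bool) (n : ℕ) : List Bool := (List.range n).map X

/-- The cylinder at a finite binary string `w`: all sequences extending `w`. -/
def cylinder (w : List Bool) : Set (ℕ → Bool) := {X | pref X w.length = w}

/-- `l` satisfies the measure condition (w.r.t. the measure `μ`):
for every `n`, the set of sequences along which `l` says yes (`true`)
at least `n` times has measure at most `2⁻ⁿ`. -/
def MeasureCondition (μ : Measure (ℕ → Bool)) (l : List Bool → Bool) : Prop :=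
  ∀ n : ℕ, μ {Y | (n : ℕ∞) ≤ {m : ℕ | l (pref Y m) = true}.encard} ≤ (2 ^ n)⁻¹

/-- The path average of a learning function `l` up to the string `w`. -/
noncomputable def pathAvg (l : List Bool → Bool) (w : List Bool) : ℝ :=
  (∑ i ∈ Finset.range (w.length + 1), if l (w.take i) then (1 : ℝ) else 0) / w.length

/-- `l` `s`-learns `X` (w.r.t. `μ`). -/
def SLearns (μ : Measure (ℕ → Bool)) (l : List Bool → Bool) (s : ℝ) (X : ℕ → Bool) : Prop :=
  MeasureCondition μ l ∧
    1 - s ≤ Filter.limsup (fun n => pathAvg l (pref X n)) Filter.atTop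

/-- `A` covers `Γ`: every sequence in `Γ` has a prefix in `A`. -/
def Covers (A : Set (List Bool)) (Γ : Set (ℕ → Bool)) : Prop :=
  ∀ X ∈ Γ, ∃ w ∈ A, pref X w.length = w

/-- `A` is a prefix-free set of strings. -/
def PrefixFree (A : Set (List Bool)) : Prop :=
  ∀ v ∈ A, ∀ w ∈ A, v <+: w → v = w

/-- The approximation `H^s_k(Γ)` to the `s`-dimensional Hausdorff outer measure:
the infimum, over prefix-free covers `A` of `Γ` by strings of length at least `k`,
of `∑_{w ∈ A} 2^{-s|w|}`. -/
noncomputable def Hsk (Γ : Set (ℕ → Bool)) (s : ℝ) (k : ℕ) : ℝ≥0∞ :=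
  ⨅ (A : Set (List Bool)) (_ : PrefixFree A ∧ (∀ w ∈ A, k ≤ w.length) ∧ Covers A Γ),
    ∑' w : A, (2 : ℝ≥0∞) ^ (-(s * (w : List Bool).length))

/-- The Hausdorff dimension of `Γ ⊆ C`: the infimum of all `s ≥ 0` with
`H^s(Γ) = lim_k H^s_k(Γ) = 0`. -/
noncomputable def hausdorffDim (Γ : Set (ℕ → Bool)) : ℝ :=
  sInf {s : ℝ | 0 ≤ s ∧
    Filter.Tendsto (fun k => Hsk Γ s k) Filter.atTop (nhds 0)}

/-! ### Prefixes and cylinders -/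

@[simp] lemma length_pref (X : ℕ → Bool) (n : ℕ) : (pref X n).length = n := by
  simp [pref]

lemma take_pref (X : ℕ → Bool) {i n : ℕ} (h : i ≤ n) : (pref X n).take i = pref X i := by
  simp [pref, ← List.map_take, List.take_range, h]

lemma mem_cylinder_pref (X : ℕ → Bool) (n : ℕ) : X ∈ cylinder (pref X n) := by
  simp [_root_.cylinder]

lemma mem_cylinder_iff (w : List Bool) (X : ℕ → Bool) :
    X ∈ cylinder w ↔ ∀ i (h : i < w.length), X i = w[i] := by
  constructor
  · intro hX i h
    have h1 : pref X w.length = w := hX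
    have h2 : (pref X w.length)[i]'(by simpa using h) = w[i] := by simp only [h1]
    simpa [pref] using h2
  · intro hX
    refine List.ext_getElem (by simp) ?_
    intro i h1 h2
    simpa [pref] using hX i h2

lemma measurableSet_cylinder (w : List Bool) : MeasurableSet (cylinder w) := by
  have : cylinder w = ⋂ (i : ℕ) (h : i < w.length), (fun X : ℕ → Bool => X i) ⁻¹' {w[i]} := by
    ext X
    simp [mem_cylinder_iff]
  rw [this]
  exact MeasurableSet.iInter fun i => MeasurableSet.iInter fun h =>
    measurable_pi_apply i (measurableSet_singleton _)

lemma cylinder_nil : cylinder [] = Set.univ := by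
  ext X; simp [_root_.cylinder, pref]

lemma cylinder_pref_anti (X : ℕ → Bool) {m n : ℕ} (h : m ≤ n) :
    cylinder (pref X n) ⊆ cylinder (pref X m) := by
  intro Y hY
  have hY' : pref Y n = pref X n := by simpa [_root_.cylinder] using hY
  simp only [_root_.cylinder, Set.mem_ofPred_eq, length_pref]
  rw [← take_pref Y h, hY', take_pref X h]

/-- Two cylinders that meet come from comparable strings, so prefix-free sets of strings
have pairwise disjoint cylinders. -/
lemma PrefixFree.disjoint {A : Set (List Bool)} (hA : PrefixFree A) {v w : List Bool}
    (hv : v ∈ A) (hw : w ∈ A) (hne : v ≠ w) : Disjoint (cylinder v) (cylinder w) := by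
  rw [Set.disjoint_left]
  intro X hXv hXw
  have h1 : pref X v.length = v := hXv
  have h2 : pref X w.length = w := hXw
  rcases le_total v.length w.length with h | h
  · apply hne (hA v hv w hw _)
    rw [← h1, ← h2, ← take_pref X h]
    exact List.take_prefix _ _
  · apply hne (hA w hw v hv _).symm
    rw [← h1, ← h2, ← take_pref X h]
    exact List.take_prefix _ _

/-- The strings that satisfy `Q` while none of their proper prefixes does. -/
def minimalStrings (Q : List Bool → Prop) : Set (List Bool) :=
  {w | Q w ∧ ∀ i < w.length, ¬ Q (w.take i)}

lemma prefixFree_minimalStrings (Q : List Bool → Prop) : PrefixFree (minimalStrings Q) := by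
  intro v hv w hw hvw
  by_contra hne
  have hlt : v.length < w.length := by
    rcases hvw.length_le.lt_or_eq with h | h
    · exact h
    · exact absurd (hvw.eq_of_length h) hne
  apply hw.2 _ hlt
  rw [← List.prefix_iff_eq_take.1 hvw]
  exact hv.1

lemma exists_minimalStrings {Q : List Bool → Prop} {X : ℕ → Bool} (h : ∃ m, Q (pref X m)) :
    ∃ w ∈ minimalStrings Q, pref X w.length = w := by
  classical
  refine ⟨pref X (Nat.find h), ⟨Nat.find_spec h, ?_⟩, by simp⟩
  intro i hi
  rw [length_pref] at hi
  rw [take_pref X hi.le]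
  exact Nat.find_min h hi

lemma pathAvg_pref (l : List Bool → Bool) (X : ℕ → Bool) (n : ℕ) :
    pathAvg l (pref X n) =
      (((Finset.range (n + 1)).filter fun i => l (pref X i) = true).card : ℝ) / n := by
  unfold pathAvg
  rw [length_pref, Finset.card_filter]
  push_cast
  congr 1
  refine Finset.sum_congr rfl fun i hi => ?_
  rw [take_pref X (Nat.lt_succ_iff.1 (Finset.mem_range.1 hi))]

lemma pathAvg_pref_nonneg (l : List Bool → Bool) (X : ℕ → Bool) (n : ℕ) :
    0 ≤ pathAvg l (pref X n) := by
  rw [pathAvg_pref]; positivity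

lemma pathAvg_pref_le (l : List Bool → Bool) (X : ℕ → Bool) (n : ℕ) :
    pathAvg l (pref X n) ≤ 2 := by
  rw [pathAvg_pref]
  have h1 : ((Finset.range (n + 1)).filter fun i => l (pref X i) = true).card ≤ n + 1 := by
    simpa using Finset.card_filter_le (Finset.range (n + 1)) fun i => l (pref X i) = true
  rcases Nat.eq_zero_or_pos n with rfl | hn
  · simp
  · rw [div_le_iff₀ (by exact_mod_cast hn)]
    have h2 : n + 1 ≤ 2 * n := by omega
    exact_mod_cast h1.trans h2

/-! ### Learnable sets have small dimension -/

/-- The measure condition bounds the number of strings of length `n` in `A` by `2 ^ (t * n)`,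
here in weighted form. -/
lemma tsum_fiber_le {μ : Measure (ℕ → Bool)}
    (hμ : ∀ w : List Bool, μ (cylinder w) = (2 ^ w.length)⁻¹) {l : List Bool → Bool}
    (hl : MeasureCondition μ l) (t ε : ℝ) {A : Set (List Bool)} (hA : PrefixFree A)
    (hAt : ∀ w ∈ A, 1 - t ≤ pathAvg l w) (n : ℕ) :
    ∑' b : (fun w : A => (w : List Bool).length) ⁻¹' {n},
      (2 : ℝ≥0∞) ^ (-((t + ε) * ((b : A) : List Bool).length)) ≤ ((2 : ℝ≥0∞) ^ (-ε)) ^ n := by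
  have hterm : ∀ b : (fun w : A => (w : List Bool).length) ⁻¹' {n},
      (2 : ℝ≥0∞) ^ (-((t + ε) * ((b : A) : List Bool).length)) =
        2 ^ ((1 - t - ε) * n) * μ (cylinder ((b : A) : List Bool)) := by
    intro b
    have hb : ((b : A) : List Bool).length = n := b.2
    rw [hμ, hb, ← ENNReal.rpow_natCast, ← ENNReal.rpow_neg,
      ← ENNReal.rpow_add _ _ (by simp) (by simp)]
    congr 1; ring
  rw [tsum_congr hterm, ENNReal.tsum_mul_left, ← measure_iUnion]
  rotate_left
  · intro b c hbc
    refine hA.disjoint (b : A).2 (c : A).2 fun h => hbc ?_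
    exact Subtype.ext (Subtype.ext h)
  · exact fun b => measurableSet_cylinder _
  have hsub : (⋃ b : (fun w : A => (w : List Bool).length) ⁻¹' {n},
      cylinder ((b : A) : List Bool)) ⊆
      {Y | ((⌈(1 - t) * n⌉₊ : ℕ) : ℕ∞) ≤ {m : ℕ | l (pref Y m) = true}.encard} := by
    intro Y hY
    obtain ⟨b, hb⟩ := Set.mem_iUnion.1 hY
    have hbn : ((b : A) : List Bool).length = n := b.2
    have hY' : pref Y n = ((b : A) : List Bool) :=
      (congrArg (pref Y) hbn).symm.trans hb
    have h1 := hAt _ (b : A).2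
    rw [← hY', pathAvg_pref] at h1
    have h2 : (1 - t) * n ≤
        (((Finset.range (n + 1)).filter fun i => l (pref Y i) = true).card : ℝ) := by
      rcases Nat.eq_zero_or_pos n with rfl | hn
      · simp
      · rwa [le_div_iff₀ (by exact_mod_cast hn)] at h1
    have h3 := Nat.ceil_le.2 h2
    rw [Set.mem_ofPred_eq]
    refine le_trans (Nat.cast_le.2 h3) ?_
    rw [← Set.encard_coe_eq_coe_finsetCard]
    apply Set.encard_le_encard
    intro i hi
    simp only [Finset.coe_filter, Set.mem_ofPred_eq] at hi
    exact hi.2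
  calc _ ≤ (2 : ℝ≥0∞) ^ ((1 - t - ε) * n) * (2 ^ ⌈(1 - t) * n⌉₊)⁻¹ := by
        gcongr
        exact (measure_mono hsub).trans (hl _)
    _ ≤ (2 : ℝ≥0∞) ^ ((1 - t - ε) * n) * 2 ^ (-((1 - t) * n)) := by
        gcongr
        rw [← ENNReal.rpow_natCast, ← ENNReal.rpow_neg]
        exact ENNReal.rpow_le_rpow_of_exponent_le (by norm_num) (neg_le_neg (Nat.le_ceil _))
    _ = _ := by
        rw [← ENNReal.rpow_add _ _ (by simp) (by simp), ← ENNReal.rpow_natCast,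
          ← ENNReal.rpow_mul]
        congr 1; ring

lemma tendsto_Hsk_of_learns {μ : Measure (ℕ → Bool)}
    (hμ : ∀ w : List Bool, μ (cylinder w) = (2 ^ w.length)⁻¹) {Γ : Set (ℕ → Bool)}
    {l : List Bool → Bool} {s r : ℝ} (hl : ∀ X ∈ Γ, SLearns μ l s X) (hsr : s < r) :
    Tendsto (fun k => Hsk Γ r k) atTop (nhds 0) := by
  rcases Γ.eq_empty_or_nonempty with rfl | ⟨X₀, hX₀⟩
  · have : ∀ k, Hsk ∅ r k = 0 := by
      intro k
      refine le_antisymm ?_ bot_le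
      refine (iInf₂_le (∅ : Set (List Bool)) ⟨fun v hv => absurd hv (Set.notMem_empty _),
        fun v hv => absurd hv (Set.notMem_empty _),
        fun v hv => absurd hv (Set.notMem_empty _)⟩).trans ?_
      simp
    simp [this]
  have hmc : MeasureCondition μ l := (hl X₀ hX₀).1
  -- `r = t + 2 * ε` with `s < t`: one `ε` makes the sum over lengths converge,
  -- the other makes it tend to `0`.
  obtain ⟨ε, hε, t, hst, hr⟩ : ∃ ε : ℝ, 0 < ε ∧ ∃ t, s < t ∧ r = t + 2 * ε :=
    ⟨(r - s) / 4, by linarith, r - 2 * ((r - s) / 4), by linarith, by ring⟩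
  have hq : (2 : ℝ≥0∞) ^ (-ε) < 1 :=
    ENNReal.rpow_lt_one_of_one_lt_of_neg (by norm_num) (by linarith)
  have hbound : ∀ k, Hsk Γ r k ≤ ((2 : ℝ≥0∞) ^ (-ε)) ^ k * (1 - (2 : ℝ≥0∞) ^ (-ε))⁻¹ := by
    intro k
    set A := minimalStrings fun w => k ≤ w.length ∧ 1 - t ≤ pathAvg l w with hA
    have hpf : PrefixFree A := prefixFree_minimalStrings _
    have hlen : ∀ w ∈ A, k ≤ w.length := fun w hw => hw.1.1
    have hcov : Covers A Γ := by
      intro X hX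
      apply exists_minimalStrings
      have hfr : ∃ᶠ n in atTop, 1 - t < pathAvg l (pref X n) :=
        frequently_lt_of_lt_limsup (isCoboundedUnder_le_of_le _ (pathAvg_pref_nonneg l X))
          (lt_of_lt_of_le (by linarith) (hl X hX).2)
      obtain ⟨n, hn, h⟩ := (frequently_atTop.1 hfr) k
      exact ⟨n, by simpa using hn, h.le⟩
    refine (iInf₂_le A ⟨hpf, hlen, hcov⟩).trans ?_
    calc ∑' w : A, (2 : ℝ≥0∞) ^ (-(r * (w : List Bool).length))
        ≤ ∑' w : A, ((2 : ℝ≥0∞) ^ (-ε)) ^ k *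
            (2 : ℝ≥0∞) ^ (-((t + ε) * (w : List Bool).length)) := by
          refine ENNReal.tsum_le_tsum fun w => ?_
          rw [← ENNReal.rpow_natCast, ← ENNReal.rpow_mul,
            ← ENNReal.rpow_add _ _ (by simp) (by simp)]
          refine ENNReal.rpow_le_rpow_of_exponent_le (by norm_num) ?_
          have : (k : ℝ) ≤ (w : List Bool).length := by exact_mod_cast hlen _ w.2
          rw [hr]
          nlinarith
      _ = ((2 : ℝ≥0∞) ^ (-ε)) ^ k *
            ∑' w : A, (2 : ℝ≥0∞) ^ (-((t + ε) * (w : List Bool).length)) :=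
          ENNReal.tsum_mul_left
      _ ≤ _ := by
          gcongr
          rw [← ENNReal.tsum_fiberwise _ (fun w : A => (w : List Bool).length),
            ← ENNReal.tsum_geometric]
          exact ENNReal.tsum_le_tsum fun n =>
            tsum_fiber_le hμ hmc t ε hpf (fun w hw => hw.1.2) n
  have hlim : Tendsto (fun k : ℕ => ((2 : ℝ≥0∞) ^ (-ε)) ^ k * (1 - (2 : ℝ≥0∞) ^ (-ε))⁻¹)
      atTop (nhds 0) := by
    have h := ENNReal.Tendsto.mul_const (b := (1 - (2 : ℝ≥0∞) ^ (-ε))⁻¹)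
      (ENNReal.tendsto_pow_atTop_nhds_zero_of_lt_one hq)
      (Or.inr (by simpa using (tsub_pos_of_lt hq).ne'))
    simpa using h
  exact tendsto_of_tendsto_of_tendsto_of_le_of_le tendsto_const_nhds hlim
    (fun _ => bot_le) hbound

/-! ### Sets of small dimension are learnable -/

/-- The measure `ν` has density at least `2 ^ j` on average over the cylinder of `w`; that is,
the martingale `w ↦ 2 ^ |w| * ν (cylinder w)` has reached capital `2 ^ j` at `w`. -/
def Heavy (ν : Measure (ℕ → Bool)) (j : ℕ) (w : List Bool) : Prop :=
  (2 : ℝ≥0∞) ^ j ≤ 2 ^ w.length * ν (cylinder w)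

open Classical in
/-- The learning function that says yes at `w` exactly when the capital of the martingale of `ν`
reaches some new power `2 ^ j` with `1 ≤ j` at `w`. -/
noncomputable def capitalLearner (ν : Measure (ℕ → Bool)) (w : List Bool) : Bool :=
  decide (∃ j, 1 ≤ j ∧ w ∈ minimalStrings (Heavy ν j))

lemma capitalLearner_pref (ν : Measure (ℕ → Bool)) (Y : ℕ → Bool) (m : ℕ) :
    capitalLearner ν (pref Y m) = true ↔
      ∃ j, 1 ≤ j ∧ Heavy ν j (pref Y m) ∧ ∀ i < m, ¬ Heavy ν j (pref Y i) := by
  have h : ∀ j, (∀ i < (pref Y m).length, ¬ Heavy ν j ((pref Y m).take i)) ↔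
      ∀ i < m, ¬ Heavy ν j (pref Y i) := by
    intro j
    rw [length_pref]
    exact forall₂_congr fun i hi => by rw [take_pref Y hi.le]
  classical
  unfold capitalLearner
  rw [decide_eq_true_iff]
  exact exists_congr fun j => and_congr_right fun _ => and_congr_right fun _ => h j

lemma Heavy.mono {ν : Measure (ℕ → Bool)} {i j : ℕ} {w : List Bool} (h : Heavy ν j w)
    (hij : i ≤ j) : Heavy ν i w :=
  (pow_le_pow_right₀ (by norm_num) hij).trans h

/-- A martingale at most doubles its capital at each step. -/
lemma Heavy.step {ν : Measure (ℕ → Bool)} {j m : ℕ} {Y : ℕ → Bool}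
    (h : Heavy ν (j + 1) (pref Y (m + 1))) : Heavy ν j (pref Y m) := by
  unfold Heavy at *
  rw [length_pref] at *
  have h1 : (2 : ℝ≥0∞) * 2 ^ j ≤ 2 * (2 ^ m * ν (cylinder (pref Y m))) := by
    calc (2 : ℝ≥0∞) * 2 ^ j = 2 ^ (j + 1) := by ring
      _ ≤ 2 ^ (m + 1) * ν (cylinder (pref Y (m + 1))) := h
      _ ≤ 2 ^ (m + 1) * ν (cylinder (pref Y m)) := by
          gcongr
          exact cylinder_pref_anti Y (Nat.le_succ m)
      _ = _ := by ring
  exact (ENNReal.mul_le_mul_iff_right (by simp) (by simp)).1 h1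

lemma not_heavy_zero {ν : Measure (ℕ → Bool)} (hν : ν Set.univ ≤ 1) {j : ℕ} (hj : 1 ≤ j)
    (Y : ℕ → Bool) : ¬ Heavy ν j (pref Y 0) := by
  intro h
  have h1 : (2 : ℝ≥0∞) ^ 1 ≤ 1 := by
    refine (h.mono hj).trans ?_
    simpa [pref, cylinder_nil] using hν
  norm_num at h1

/-- Ville's inequality for the martingale of `ν`. -/
lemma ville {μ ν : Measure (ℕ → Bool)}
    (hμ : ∀ w : List Bool, μ (cylinder w) = (2 ^ w.length)⁻¹) (hν : ν Set.univ ≤ 1) (n : ℕ) :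
    μ {Y | ∃ m, Heavy ν n (pref Y m)} ≤ (2 ^ n)⁻¹ := by
  set B := minimalStrings (Heavy ν n) with hB
  have hsub : {Y | ∃ m, Heavy ν n (pref Y m)} ⊆ ⋃ w ∈ B, cylinder w := by
    intro Y hY
    obtain ⟨w, hw, h⟩ := exists_minimalStrings hY
    exact Set.mem_biUnion hw h
  calc _ ≤ μ (⋃ w ∈ B, cylinder w) := measure_mono hsub
    _ ≤ ∑' w : B, μ (cylinder w) := measure_biUnion_le μ B.to_countable _
    _ ≤ ∑' w : B, (2 ^ n)⁻¹ * ν (cylinder w) := by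
        refine ENNReal.tsum_le_tsum fun w => ?_
        have h : Heavy ν n w := w.2.1
        unfold Heavy at h
        rw [hμ, ← ENNReal.div_eq_inv_mul,
          ENNReal.le_div_iff_mul_le (Or.inl (by simp)) (Or.inl (by simp)),
          ENNReal.inv_mul_le_iff (by simp) (by simp)]
        exact h
    _ = (2 ^ n)⁻¹ * ν (⋃ w ∈ B, cylinder w) := by
        rw [ENNReal.tsum_mul_left, measure_biUnion B.to_countable]
        · intro v hv w hw hne
          exact (prefixFree_minimalStrings _).disjoint hv hw hne
        · exact fun w _ => measurableSet_cylinder w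
    _ ≤ (2 ^ n)⁻¹ * 1 := by
        gcongr
        exact (measure_mono (Set.subset_univ _)).trans hν
    _ = _ := mul_one _

lemma measureCondition_capitalLearner {μ ν : Measure (ℕ → Bool)}
    (hμ : ∀ w : List Bool, μ (cylinder w) = (2 ^ w.length)⁻¹) (hν : ν Set.univ ≤ 1) :
    MeasureCondition μ (capitalLearner ν) := by
  intro n
  rcases Nat.eq_zero_or_pos n with rfl | hn
  · refine (measure_mono (Set.subset_univ _)).trans ?_
    rw [← cylinder_nil, hμ]; simp
  refine (measure_mono ?_).trans (ville hμ hν n)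
  intro Y hY
  by_contra hno
  simp only [Set.mem_ofPred_eq, not_exists] at hno hY
  -- Distinct yes-positions have distinct exponents, all of them in `[1, n - 1]`.
  choose! f hf using fun m (hm : capitalLearner ν (pref Y m) = true) =>
    (capitalLearner_pref ν Y m).1 hm
  have hle : {m : ℕ | capitalLearner ν (pref Y m) = true}.encard ≤
      ((Finset.Icc 1 (n - 1) : Finset ℕ) : Set ℕ).encard := by
    apply Set.encard_le_encard_of_injOn (f := f)
    · intro m hm
      obtain ⟨h1, h2, -⟩ := hf m hm
      have h3 : f m < n := by
        by_contra h
        exact hno m (h2.mono (not_lt.1 h))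
      simp only [Finset.coe_Icc, Set.mem_Icc]
      omega
    · intro a ha b hb hab
      obtain ⟨-, ha2, ha3⟩ := hf a ha
      obtain ⟨-, hb2, hb3⟩ := hf b hb
      rcases lt_trichotomy a b with h | h | h
      · exact absurd (hab ▸ ha2) (hb3 a h)
      · exact h
      · exact absurd (hab ▸ hb2) (ha3 b h)
  rw [Set.encard_coe_eq_coe_finsetCard, Nat.card_Icc] at hle
  have h4 : (n : ℕ∞) ≤ ((n - 1 + 1 - 1 : ℕ) : ℕ∞) := hY.trans hle
  have h5 : n ≤ n - 1 + 1 - 1 := by exact_mod_cast h4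
  omega

/-- Reaching capital `2 ^ N` takes at least `N` yes-answers: the first times at which the capital
reaches `2 ^ 1, …, 2 ^ N` are distinct because the capital at most doubles. -/
lemma le_card_yes {ν : Measure (ℕ → Bool)} (hν : ν Set.univ ≤ 1) {Y : ℕ → Bool} {N n : ℕ}
    (h : Heavy ν N (pref Y n)) :
    N ≤ ((Finset.range (n + 1)).filter fun i => capitalLearner ν (pref Y i) = true).card := by
  classical
  have hex : ∀ j ∈ Finset.Icc 1 N, ∃ m, m ≤ n ∧ Heavy ν j (pref Y m) ∧
      ∀ i < m, ¬ Heavy ν j (pref Y i) := by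
    intro j hj
    have hj' : ∃ m, Heavy ν j (pref Y m) := ⟨n, h.mono (Finset.mem_Icc.1 hj).2⟩
    exact ⟨Nat.find hj', Nat.find_min' hj' (h.mono (Finset.mem_Icc.1 hj).2),
      Nat.find_spec hj', fun i hi => Nat.find_min hj' hi⟩
  choose! f hf using hex
  have key : ∀ a ∈ Finset.Icc 1 N, ∀ b ∈ Finset.Icc 1 N, a < b → f a ≠ f b := by
    intro a ha b hb hab heq
    obtain ⟨-, ha2, ha3⟩ := hf a ha
    obtain ⟨-, hb2, -⟩ := hf b hb
    obtain ⟨c, rfl⟩ : ∃ c, b = c + 1 := ⟨b - 1, by omega⟩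
    rw [← heq] at hb2
    rcases Nat.eq_zero_or_pos (f a) with h0 | hpos
    · rw [h0] at hb2
      exact not_heavy_zero hν (by omega) Y hb2
    · obtain ⟨m, hm⟩ : ∃ m, f a = m + 1 := ⟨f a - 1, by omega⟩
      rw [hm] at hb2
      exact ha3 m (by omega) (hb2.step.mono (by omega))
  have hcard := Finset.card_le_card_of_injOn (s := Finset.Icc 1 N)
    (t := (Finset.range (n + 1)).filter fun i => capitalLearner ν (pref Y i) = true) f ?_ ?_
  · simpa using hcard
  · intro j hj
    obtain ⟨h1, h2, h3⟩ := hf j hj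
    simp only [Finset.coe_filter, Set.mem_ofPred_eq, Finset.mem_range]
    exact ⟨by omega, (capitalLearner_pref ν Y _).2 ⟨j, (Finset.mem_Icc.1 hj).1, h2, h3⟩⟩
  · intro a ha b hb hab
    rcases lt_trichotomy a b with h | h | h
    · exact absurd hab (key a ha b hb h)
    · exact h
    · exact absurd hab.symm (key b hb a ha h)

/-- If `H^t(Γ) = 0`, spreading mass `2 ^ (-t * |w|)` uniformly over the cylinder of each string `w`
of a sequence of cheap covers gives a measure of total mass at most `1` that is large on infinitely
many cylinders around each point of `Γ`. -/
lemma exists_measure_of_tendsto_Hsk {μ : Measure (ℕ → Bool)}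
    (hμ : ∀ w : List Bool, μ (cylinder w) = (2 ^ w.length)⁻¹) {Γ : Set (ℕ → Bool)} {t : ℝ}
    (h : Tendsto (fun k => Hsk Γ t k) atTop (nhds 0)) :
    ∃ ν : Measure (ℕ → Bool), ν Set.univ ≤ 1 ∧
      ∀ X ∈ Γ, ∀ k : ℕ, ∃ n ≥ k, (2 : ℝ≥0∞) ^ (-(t * n)) ≤ ν (cylinder (pref X n)) := by
  have hex : ∀ k : ℕ, ∃ A : Set (List Bool), (∀ w ∈ A, k ≤ w.length) ∧ Covers A Γ ∧
      ∑' w : A, (2 : ℝ≥0∞) ^ (-(t * (w : List Bool).length)) ≤ 2⁻¹ ^ (k + 1) := by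
    intro k
    have hpos : (0 : ℝ≥0∞) < 2⁻¹ ^ (k + 1) := by
      apply ENNReal.pow_pos; simp
    obtain ⟨K, hK, hkK⟩ := ((h.eventually (gt_mem_nhds hpos)).and (eventually_ge_atTop k)).exists
    unfold Hsk at hK
    simp only [iInf_lt_iff] at hK
    obtain ⟨A, ⟨-, hlen, hcov⟩, hsum⟩ := hK
    exact ⟨A, fun w hw => hkK.trans (hlen w hw), hcov, hsum.le⟩
  choose A hlen hcov hsum using hex
  have hmass : ∀ w : List Bool, (2 : ℝ≥0∞) ^ ((1 - t) * w.length) * μ (cylinder w) =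
      2 ^ (-(t * w.length)) := by
    intro w
    rw [hμ, ← ENNReal.rpow_natCast, ← ENNReal.rpow_neg,
      ← ENNReal.rpow_add _ _ (by simp) (by simp)]
    congr 1; ring
  refine ⟨Measure.sum fun p : Σ k, A k =>
    ((2 : ℝ≥0∞) ^ ((1 - t) * (p.2 : List Bool).length)) • μ.restrict (cylinder p.2), ?_, ?_⟩
  · rw [Measure.sum_apply _ MeasurableSet.univ]
    simp only [Measure.smul_apply, Measure.restrict_apply_univ, smul_eq_mul, hmass]
    rw [ENNReal.tsum_sigma']
    refine (ENNReal.tsum_le_tsum hsum).trans ?_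
    rw [ENNReal.tsum_geometric_add_one, ENNReal.one_sub_inv_two, inv_inv]
    exact (ENNReal.inv_mul_cancel (by simp) (by simp)).le
  · intro X hX k
    obtain ⟨w, hw, hXw⟩ := hcov k X hX
    refine ⟨w.length, hlen k w hw, ?_⟩
    rw [hXw, ← hmass w]
    refine le_trans ?_ (Measure.le_sum_apply _ _)
    refine le_trans ?_ (ENNReal.le_tsum (⟨k, ⟨w, hw⟩⟩ : Σ k, A k))
    simp [Measure.restrict_apply (measurableSet_cylinder w)]

lemma exists_learner_of_tendsto_Hsk {μ : Measure (ℕ → Bool)}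
    (hμ : ∀ w : List Bool, μ (cylinder w) = (2 ^ w.length)⁻¹) {Γ : Set (ℕ → Bool)} {t s : ℝ}
    (h : Tendsto (fun k => Hsk Γ t k) atTop (nhds 0)) (hts : t < s) :
    ∃ l : List Bool → Bool, ∀ X ∈ Γ, SLearns μ l s X := by
  obtain ⟨ν, hν, hΓ⟩ := exists_measure_of_tendsto_Hsk hμ h
  refine ⟨capitalLearner ν, fun X hX => ⟨measureCondition_capitalLearner hμ hν, ?_⟩⟩
  refine le_limsup_of_frequently_le ?_ (isBoundedUnder_of ⟨2, pathAvg_pref_le _ X⟩)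
  rw [frequently_atTop]
  intro k
  -- Rounding `(1 - t) * n` down costs at most one yes-answer, negligible once `1 ≤ (s - t) * n`.
  obtain ⟨K, hK⟩ := exists_nat_ge (1 / (s - t))
  obtain ⟨n, hn, hbig⟩ := hΓ X hX (max k (K + 1))
  have hnk : k ≤ n := le_trans (le_max_left _ _) hn
  have hnK : K + 1 ≤ n := le_trans (le_max_right _ _) hn
  refine ⟨n, hnk, ?_⟩
  have hn0 : (0 : ℝ) < n := by exact_mod_cast (by omega : 0 < n)
  have hsn : 1 ≤ (s - t) * n := by
    have h1 : (1 / (s - t)) ≤ n := hK.trans (by exact_mod_cast (by omega : K ≤ n))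
    rwa [div_le_iff₀ (by linarith), mul_comm] at h1
  rw [pathAvg_pref, le_div_iff₀ hn0]
  rcases le_or_gt ((1 - t) * n) 0 with hneg | hpos
  · have : (0 : ℝ) ≤
      (((Finset.range (n + 1)).filter fun i => capitalLearner ν (pref X i) = true).card : ℝ) := by
      positivity
    linarith
  have hheavy : Heavy ν ⌊(1 - t) * n⌋₊ (pref X n) := by
    unfold Heavy
    rw [length_pref]
    calc (2 : ℝ≥0∞) ^ ⌊(1 - t) * n⌋₊ ≤ 2 ^ ((1 - t) * n) := by
          rw [← ENNReal.rpow_natCast]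
          exact ENNReal.rpow_le_rpow_of_exponent_le (by norm_num) (Nat.floor_le hpos.le)
      _ = 2 ^ n * 2 ^ (-(t * n)) := by
          rw [← ENNReal.rpow_natCast, ← ENNReal.rpow_add _ _ (by simp) (by simp)]
          congr 1; ring
      _ ≤ _ := by gcongr
  have hc : ((⌊(1 - t) * n⌋₊ : ℕ) : ℝ) ≤
      (((Finset.range (n + 1)).filter fun i => capitalLearner ν (pref X i) = true).card : ℝ) := by
    exact_mod_cast le_card_yes hν hheavy
  have hfl := Nat.lt_floor_add_one ((1 - t) * n)
  linarith

/-- The Hausdorff dimension of `Γ` equals the infimum of all `s ∈ (0,∞)`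
such that some learning function `s`-learns every `X ∈ Γ`. -/
theorem hausdorffDim_eq_inf_s_learnable
    (μ : Measure (ℕ → Bool)) (hμ : ∀ w : List Bool, μ (cylinder w) = (2 ^ w.length)⁻¹)
    (Γ : Set (ℕ → Bool)) :
    hausdorffDim Γ = sInf {s : ℝ | 0 < s ∧ ∃ l : List Bool → Bool, ∀ X ∈ Γ, SLearns μ l s X} := by
  have hbdd : BddBelow {s : ℝ | 0 ≤ s ∧ Tendsto (fun k => Hsk Γ s k) atTop (nhds 0)} :=
    ⟨0, fun s hs => hs.1⟩
  have hbdd' : BddBelow {s : ℝ | 0 < s ∧ ∃ l : List Bool → Bool, ∀ X ∈ Γ, SLearns μ l s X} :=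
    ⟨0, fun s hs => hs.1.le⟩
  -- The learner of the zero measure `1`-learns every sequence, so both sets are nonempty.
  have hone : (1 : ℝ) ∈
      {s : ℝ | 0 < s ∧ ∃ l : List Bool → Bool, ∀ X ∈ Γ, SLearns μ l s X} := by
    refine ⟨one_pos, capitalLearner 0, fun X _ =>
      ⟨measureCondition_capitalLearner hμ (by simp), ?_⟩⟩
    refine le_limsup_of_frequently_le (Eventually.frequently (Eventually.of_forall fun n => ?_))
      (isBoundedUnder_of ⟨2, pathAvg_pref_le _ X⟩)
    simpa using pathAvg_pref_nonneg _ X n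
  have hup : ∀ s ∈ {s : ℝ | 0 < s ∧ ∃ l : List Bool → Bool, ∀ X ∈ Γ, SLearns μ l s X},
      ∀ r, s < r → r ∈ {s : ℝ | 0 ≤ s ∧ Tendsto (fun k => Hsk Γ s k) atTop (nhds 0)} := by
    rintro s ⟨hs, l, hl⟩ r hr
    exact ⟨(hs.trans hr).le, tendsto_Hsk_of_learns hμ hl hr⟩
  unfold hausdorffDim
  apply le_antisymm
  · refine le_csInf ⟨1, hone⟩ fun s hs => le_of_forall_gt_imp_ge_of_dense fun r hr => ?_
    exact csInf_le hbdd (hup s hs r hr)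
  · refine le_csInf ⟨2, hup 1 hone 2 (by norm_num)⟩ fun t ht =>
      le_of_forall_gt_imp_ge_of_dense fun s hs => ?_
    exact csInf_le hbdd' ⟨ht.1.trans_lt hs, exists_learner_of_tendsto_Hsk hμ ht.2 hs⟩
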